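/- For any prime p ≥ 5, the double sum ∑_{n=0}^{p-1} ∑_{m=0}^{p-1} binomial(n+m, m)^2 is congruent to 1 modulo p^2 if p ≡ 1 (mod 3), and congruent to -1 modulo p^2 if p ≡ 2 (mod 3). -/

import Mathlib

/-!
Put `q = p ^ a`. Modulo `p ^ 2` the terms with `n + m ≥ q` vanish, because Vandermonde's identity
shows `p ∣ (n + m).choose m`; summing the others along the diagonals `n + m = k` leaves
`∑ k < q, centralBinom k`. Since the quadratic character `χ` modulo 3 satisfies
`χ (x + 2) + χ (x + 1) + χ x = 0`, this sum telescopes to `∑ j ≤ q, (2 * q).choose (q + j) * χ j`.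
Modulo `p ^ 2`, Vandermonde's identity gives `(2 * q).choose (q + j) = 2 * q.choose j` for `j < q`,
and the same relation, read as `1 + E = -E ^ 2` for the shift operator `E`, evaluates
`∑ j ≤ q, q.choose j * χ j` as `(-1) ^ q * χ (2 * q)`.
-/

open Finset

local notation "χ₃" => quadraticChar (ZMod 3)

lemma quadraticChar_three_add_two (x : ZMod 3) : χ₃ (x + 2) = -χ₃ x - χ₃ (x + 1) := by
  revert x
  decide

lemma quadraticChar_three_two_mul (x : ZMod 3) : χ₃ (2 * x) = -χ₃ x := by
  revert x
  decide

lemma sum_choose_mul_quadraticChar_three (n : ℕ) (x : ZMod 3) :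
    ∑ k ∈ range (n + 1), (n.choose k : ℤ) * χ₃ (x + k) = (-1) ^ n * χ₃ (x + 2 * n) := by
  induction n generalizing x with
  | zero => simp
  | succ n ih =>
    have shifted : ∑ k ∈ range (n + 1), (n.choose k : ℤ) * χ₃ (x + (k + 1 : ℕ)) =
        (-1) ^ n * χ₃ (x + 2 * n + 1) := by
      simpa only [Nat.cast_succ, add_assoc, add_comm, add_left_comm] using ih (x + 1)
    rw [sum_choose_succ_mul (fun k _ ↦ χ₃ (x + k)), ih x, shifted, Nat.cast_succ, mul_add, mul_one,
      ← add_assoc, quadraticChar_three_add_two]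
    ring

lemma choose_two_mul_succ (n k : ℕ) :
    (2 * (n + 1)).choose (k + 2) =
      (2 * n).choose k + 2 * (2 * n).choose (k + 1) + (2 * n).choose (k + 2) := by
  rw [mul_add_one, Nat.choose_succ_succ', Nat.choose_succ_succ', Nat.choose_succ_succ']
  ring

lemma sum_choose_two_mul_succ_mul_quadraticChar_three (n N : ℕ) :
    ∑ j ∈ range (N + 1), ((2 * (n + 1)).choose (n + 1 + j) : ℤ) * χ₃ j =
      ∑ j ∈ range (N + 1), ((2 * n).choose (n + j) : ℤ) * χ₃ j + n.centralBinom +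
        (2 * n).choose (n + N + 1) * χ₃ N - (2 * n).choose (n + N) * χ₃ (N + 1) := by
  induction N with
  | zero => simp [Nat.centralBinom]
  | succ N ih =>
    rw [sum_range_succ, ih, sum_range_succ _ (N + 1), show n + 1 + (N + 1) = n + N + 2 by ring,
      choose_two_mul_succ, Nat.cast_succ, add_assoc (N : ZMod 3), one_add_one_eq_two,
      quadraticChar_three_add_two]
    push_cast [← add_assoc]
    ring

lemma sum_centralBinom_eq_sum_choose_mul_quadraticChar_three {n N : ℕ} (h : n ≤ N) :
    ∑ k ∈ range n, (k.centralBinom : ℤ) =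
      ∑ j ∈ range (N + 1), ((2 * n).choose (n + j) : ℤ) * χ₃ j := by
  induction n with
  | zero => simp [sum_range_succ']
  | succ n ih =>
    rw [sum_range_succ, ih (by lia), sum_choose_two_mul_succ_mul_quadraticChar_three,
      Nat.choose_eq_zero_of_lt (show 2 * n < n + N by lia),
      Nat.choose_eq_zero_of_lt (show 2 * n < n + N + 1 by lia)]
    simp

lemma sum_sum_choose_sq_triangle (N : ℕ) :
    ∑ n ∈ range N, ∑ m ∈ range (N - n), (n + m).choose m ^ 2 = ∑ k ∈ range N, k.centralBinom := by
  rw [← sum_range_diag_flip N fun n m ↦ (n + m).choose m ^ 2]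
  refine sum_congr rfl fun k _ ↦ ?_
  rw [Nat.centralBinom, ← Nat.sum_range_choose_sq]
  refine sum_congr rfl fun i hi ↦ ?_
  have hik : i ≤ k := mem_range_succ_iff.mp hi
  rw [Nat.add_sub_cancel' hik, Nat.choose_symm hik]

section PrimePower

variable {p : ℕ} (hp : p.Prime) (a : ℕ)
include hp

lemma prime_dvd_choose_add_of_lt_pow {n m : ℕ} (hn : n < p ^ a) (hm : m < p ^ a)
    (h : p ^ a ≤ n + m) : p ∣ (n + m).choose m := by
  obtain ⟨r, hr⟩ := Nat.exists_eq_add_of_le h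
  rw [hr, Nat.add_choose_eq]
  refine dvd_sum fun ⟨i, j⟩ hij ↦ ?_
  rw [HasAntidiagonal.mem_antidiagonal] at hij
  rcases eq_or_ne i 0 with rfl | hi
  · simp [Nat.choose_eq_zero_of_lt (show r < j by lia)]
  · exact (hp.dvd_choose_pow hi (by lia)).mul_right _

lemma cast_choose_two_mul_prime_pow {i : ℕ} (hi : i < p ^ a) :
    ((2 * p ^ a).choose (p ^ a + i) : ZMod (p ^ 2)) = 2 * (p ^ a).choose i := by
  have pair_subset : {(p ^ a, i), (i, p ^ a)} ⊆ antidiagonal (p ^ a + i) := by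
    simp [insert_subset_iff, add_comm]
  have vanishes : ∀ x ∈ antidiagonal (p ^ a + i), x ∉ ({(p ^ a, i), (i, p ^ a)} : Finset _) →
      (((p ^ a).choose x.1 * (p ^ a).choose x.2 : ℕ) : ZMod (p ^ 2)) = 0 := by
    rintro ⟨b, c⟩ hsum hne
    rw [HasAntidiagonal.mem_antidiagonal] at hsum
    simp only [mem_insert, mem_singleton, Prod.mk.injEq, not_or] at hne
    rcases lt_or_ge (p ^ a) b with hb | hb
    · simp [Nat.choose_eq_zero_of_lt hb]
    rcases lt_or_ge (p ^ a) c with hc | hc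
    · simp [Nat.choose_eq_zero_of_lt hc]
    rw [ZMod.natCast_eq_zero_iff, sq]
    exact mul_dvd_mul (hp.dvd_choose_pow (by lia) (by lia)) (hp.dvd_choose_pow (by lia) (by lia))
  rw [two_mul, Nat.add_choose_eq, Nat.cast_sum, ← sum_subset pair_subset vanishes,
    sum_pair (by simp [hi.ne'])]
  simp [two_mul]

lemma two_mul_neg_one_pow_prime_pow : (2 * (-1) ^ p ^ a : ZMod (p ^ 2)) = -2 := by
  rcases hp.eq_two_or_odd' with rfl | hodd
  · rcases neg_one_pow_eq_or (ZMod (2 ^ 2)) (2 ^ a) with h | h <;> rw [h] <;> decide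
  · rw [hodd.pow.neg_one_pow, mul_neg_one]

lemma sum_centralBinom_prime_pow :
    ∑ k ∈ range (p ^ a), (k.centralBinom : ZMod (p ^ 2)) = χ₃ (p ^ a) := by
  have telescoped := congrArg (Int.cast : ℤ → ZMod (p ^ 2))
    (sum_centralBinom_eq_sum_choose_mul_quadraticChar_three (le_refl (p ^ a)))
  have transform := congrArg (Int.cast : ℤ → ZMod (p ^ 2))
    (sum_choose_mul_quadraticChar_three (p ^ a) 0)
  have halved : ∑ j ∈ range (p ^ a), ((2 * p ^ a).choose (p ^ a + j) : ZMod (p ^ 2)) * χ₃ j =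
      2 * ∑ j ∈ range (p ^ a), ((p ^ a).choose j : ZMod (p ^ 2)) * χ₃ j := by
    rw [mul_sum]
    refine sum_congr rfl fun j hj ↦ ?_
    rw [cast_choose_two_mul_prime_pow hp a (mem_range.mp hj), mul_assoc]
  simp only [zero_add, quadraticChar_three_two_mul, sum_range_succ, ← two_mul, Nat.choose_self]
    at telescoped transform
  push_cast at telescoped transform
  rw [telescoped, halved]
  linear_combination 2 * transform -
    (χ₃ (p ^ a) : ZMod (p ^ 2)) * two_mul_neg_one_pow_prime_pow hp a

lemma sum_sum_choose_sq_eq_sum_centralBinom :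
    ∑ n ∈ range (p ^ a), ∑ m ∈ range (p ^ a), ((n + m).choose m : ZMod (p ^ 2)) ^ 2 =
      ∑ k ∈ range (p ^ a), (k.centralBinom : ZMod (p ^ 2)) := by
  rw [← Nat.cast_sum, ← sum_sum_choose_sq_triangle]
  push_cast
  refine sum_congr rfl fun n hn ↦ (sum_subset (range_mono (Nat.sub_le _ _)) fun m hm hm' ↦ ?_).symm
  rw [mem_range] at hn hm hm'
  rw [← Nat.cast_pow, ZMod.natCast_eq_zero_iff]
  exact pow_dvd_pow_of_dvd (prime_dvd_choose_add_of_lt_pow hp a hn hm (by lia)) 2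

theorem double_sum_choose_sq_mod_p_sq_general :
    ∑ n ∈ range (p ^ a), ∑ m ∈ range (p ^ a), ((n + m).choose m : ZMod (p ^ 2)) ^ 2 =
      χ₃ (p ^ a) :=
  (sum_sum_choose_sq_eq_sum_centralBinom hp a).trans (sum_centralBinom_prime_pow hp a)

end PrimePower

theorem double_sum_choose_sq_mod_p_sq (p : ℕ) (hp : p.Prime) (hp5 : 5 ≤ p) :
    (p % 3 = 1 → (∑ n ∈ Finset.range p, ∑ m ∈ Finset.range p,
      ((n + m).choose m : ZMod (p ^ 2)) ^ 2) = 1) ∧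
    (p % 3 = 2 → (∑ n ∈ Finset.range p, ∑ m ∈ Finset.range p,
      ((n + m).choose m : ZMod (p ^ 2)) ^ 2) = -1) := by
  have h := double_sum_choose_sq_mod_p_sq_general hp 1
  rw [pow_one, pow_one, ← ZMod.natCast_mod p 3] at h
  constructor <;> intro hmod <;> simp [h, hmod, show χ₃ 2 = -1 by decide]
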